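/- arXiv:2410.02460 — 6 statements merged into one kernel-verified Lean document; each statement's English description precedes it below -/
import Mathlib

section
/- For each j ∈ {4,5} and every positive integer n: if n is not of the form 7k − 2 for a positive integer k, then μ(n,j) = ⌈4n/7⌉; and if n = 7k − 2 for some positive integer k, then μ(n,j) = ⌈4n/7⌉ + 1 = 4k. -/
/-!
Write `|u|_Z` for the weight of `u` on a set `Z` of coordinates.

*Lower bound.* Let `C` be the column space of `W` and let `w ∈ C` have maximal weight on `Z`; put
`Z' = {i ∈ Z : w i = 0}`. For `u ∈ C`, with `b = |u|_{Z'}`, one has `|u + w|_Z + |u|_Z = |w|_Z + 2b`,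
so maximality of `w` gives `2b ≤ |w|_Z` and also `2b ≤ |u|_Z`. Hence the maximal weight on `Z` is at
least twice the maximal weight on `Z'`, and if `Z` is covered by words of weight at most `m` on `Z`,
then `Z'` is covered by words of weight at most `m / 2` on `Z'` (`exists_residual`). Starting with
`m = 5` and taking residuals three times (`5 → 2 → 1 → 0`) exhausts all coordinates, so
`n = M₀ + M₁ + M₂` with `M₀ ≥ 2 M₁` and `M₁ ≥ 2 M₂`, where `M₀ = M(W,0)`; this forces both the bound
`4n/7` and its improvement when `n = 7k - 2`.

*Upper bound.* The simplex codes of lengths `1, 3, 7` have all nonzero weights equal to `1, 2, 4` and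
are column spaces of matrices with unit diagonal; block diagonal sums of these attain the bound.
-/

open Matrix

/-- `Mfun W c` is `M(W,c)`: the maximum of `|W·x + c|` over all `x ∈ 𝔽₂ⁿ`. -/
def Mfun {n : ℕ} (W : Matrix (Fin n) (Fin n) (ZMod 2)) (c : Fin n → ZMod 2) : ℕ :=
  Finset.univ.sup fun x : Fin n → ZMod 2 => hammingNorm (W.mulVec x + c)

/-- `Aset n m`: matrices with all diagonal entries 1 and every column of Hamming weight ≤ m. -/
def Aset (n m : ℕ) : Set (Matrix (Fin n) (Fin n) (ZMod 2)) :=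
  {W | (∀ i, W i i = 1) ∧ ∀ j, hammingNorm (fun i => W i j) ≤ m}

/-- `AstarSet n m`: matrices with all diagonal entries 1 and every column of Hamming weight
exactly m. -/
def AstarSet (n m : ℕ) : Set (Matrix (Fin n) (Fin n) (ZMod 2)) :=
  {W | (∀ i, W i i = 1) ∧ ∀ j, hammingNorm (fun i => W i j) = m}

/-- `μ(n,m) = min { M(W,0) : W ∈ A(n,m) }`. -/
noncomputable def mu (n m : ℕ) : ℕ := sInf ((fun W => Mfun W 0) '' Aset n m)

/-- `μ*(n,m) = min { M(W,0) : W ∈ A*(n,m) }`. -/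
noncomputable def muStar (n m : ℕ) : ℕ := sInf ((fun W => Mfun W 0) '' AstarSet n m)

/-- `ν(n,m) = min { M(W,c) : W ∈ A(n,m), c ∈ 𝔽₂ⁿ }`. -/
noncomputable def nu (n m : ℕ) : ℕ := sInf {t | ∃ W ∈ Aset n m, ∃ c, Mfun W c = t}

/-- `ν*(n,m) = min { M(W,c) : W ∈ A*(n,m), c ∈ 𝔽₂ⁿ }`. -/
noncomputable def nuStar (n m : ℕ) : ℕ := sInf {t | ∃ W ∈ AstarSet n m, ∃ c, Mfun W c = t}

/-- The sequence `a` from the paper: `a(1)=1`, `a(2^k−1+i)=2^{k−1}+a(i)` for `1 ≤ i ≤ 2^k−1`,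
and `a(2^{k+1}−1)=2^k`.  (For `2^k ≤ n ≤ 2^{k+1}-1` we have `Nat.log2 n = k`.) -/
def aseq : ℕ → ℕ
  | 0 => 0
  | 1 => 1
  | (n+2) =>
    let k := Nat.log2 (n+2)
    if n + 2 = 2^(k+1) - 1 then 2^k
    else 2^(k-1) + aseq ((n+2) - (2^k - 1))
decreasing_by
  have hk : 1 ≤ Nat.log2 (n+2) := by
    rw [Nat.le_log2 (by omega)]
    omega
  have h2 : 2 ≤ 2 ^ Nat.log2 (n+2) := by
    calc (2:ℕ) = 2^1 := rfl
    _ ≤ _ := Nat.pow_le_pow_right (by norm_num) hk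
  omega

/-- The upper bound `U(n,m)`: with `k` such that `2^k ≤ m < 2^{k+1}` and
`n = (2^{k+1}−1)q + r`, `q ≥ 0`, `1 ≤ r ≤ 2^{k+1}−1`, set `U(n,m) = q·2^k + a(r)`. -/
def Ufun (n m : ℕ) : ℕ :=
  let k := Nat.log2 m
  let p := 2^(k+1) - 1
  ((n-1)/p) * 2^k + aseq ((n-1) % p + 1)

/-- The weight of `u` on the set `Z` of coordinates. -/
def wtOn {n : ℕ} (Z : Finset (Fin n)) (u : Fin n → ZMod 2) : ℕ :=
  (Z.filter fun i => u i ≠ 0).card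

/-- Every coordinate in `Z` lies in the support of a word of `C` of weight at most `m` on `Z`. -/
def Covers {n : ℕ} (C : AddSubgroup (Fin n → ZMod 2)) (Z : Finset (Fin n)) (m : ℕ) : Prop :=
  ∀ i ∈ Z, ∃ g ∈ C, g i ≠ 0 ∧ wtOn Z g ≤ m

theorem wtOn_add_wtOn {n : ℕ} (Z : Finset (Fin n)) (u w : Fin n → ZMod 2) :
    wtOn Z (u + w) + wtOn Z u = wtOn Z w + 2 * wtOn (Z.filter fun i => w i = 0) u := by
  simp only [wtOn, Finset.filter_filter, Finset.card_filter, Finset.mul_sum,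
    ← Finset.sum_add_distrib, Pi.add_apply]
  refine Finset.sum_congr rfl fun i _ => ?_
  generalize u i = a
  generalize w i = b
  revert a b
  decide

theorem wtOn_add_card {n : ℕ} (Z : Finset (Fin n)) (w : Fin n → ZMod 2) :
    wtOn Z w + (Z.filter fun i => w i = 0).card = Z.card := by
  rw [wtOn, add_comm]
  exact Finset.card_filter_add_card_filter_not _

/-- The residual step: passing to the zero set of a word of maximal weight halves the covering
weight, and at least halves the maximal weight. -/
theorem exists_residual {n : ℕ} (C : AddSubgroup (Fin n → ZMod 2)) (Z : Finset (Fin n)) (m : ℕ)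
    (h : Covers C Z m) :
    ∃ w ∈ C, ∃ Z' : Finset (Fin n), Covers C Z' (m / 2) ∧ wtOn Z w + Z'.card = Z.card ∧
      ∀ u ∈ C, 2 * wtOn Z' u ≤ wtOn Z w := by
  obtain ⟨w, hw, hmax⟩ := Set.exists_max_image (C : Set (Fin n → ZMod 2)) (wtOn Z)
    (Set.toFinite _) ⟨0, C.zero_mem⟩
  refine ⟨w, hw, Z.filter fun i => w i = 0, ?_, wtOn_add_card Z w, fun u hu => ?_⟩
  · intro i hi
    obtain ⟨g, hg, hgi, hgm⟩ := h i (Finset.mem_filter.1 hi).1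
    have h1 := hmax _ (C.add_mem hg hw)
    have h2 := wtOn_add_wtOn Z g w
    exact ⟨g, hg, hgi, by omega⟩
  · have h1 := hmax _ (C.add_mem hu hw)
    have h2 := hmax _ hu
    have h3 := wtOn_add_wtOn Z u w
    omega

theorem Covers.eq_empty {n : ℕ} {C : AddSubgroup (Fin n → ZMod 2)} {Z : Finset (Fin n)}
    (h : Covers C Z 0) : Z = ∅ := by
  refine Finset.eq_empty_of_forall_notMem fun i hi => ?_
  obtain ⟨g, -, hgi, h0⟩ := h i hi
  have : i ∈ Z.filter fun i => g i ≠ 0 := Finset.mem_filter.2 ⟨hi, hgi⟩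
  rw [Finset.card_eq_zero.1 (Nat.le_zero.1 h0)] at this
  simp at this

theorem wtOn_univ {n : ℕ} (u : Fin n → ZMod 2) : wtOn Finset.univ u = hammingNorm u := rfl

/-- The residual step applied three times. -/
theorem exists_decomposition {n : ℕ} {W : Matrix (Fin n) (Fin n) (ZMod 2)} (hW : W ∈ Aset n 5) :
    ∃ a b c : ℕ, n = a + b + c ∧ 2 * b ≤ a ∧ 2 * c ≤ b ∧ a ≤ Mfun W 0 := by
  let C : AddSubgroup (Fin n → ZMod 2) := W.mulVecLin.toAddMonoidHom.range
  have hC : Covers C Finset.univ 5 := by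
    intro i _
    refine ⟨W.col i, ⟨Pi.single i 1, ?_⟩, ?_, hW.2 i⟩
    · simp
    · simp [hW.1 i]
  obtain ⟨w₀, hw₀, Z₁, hZ₁, h₀, hm₀⟩ := exists_residual C _ _ hC
  obtain ⟨w₁, hw₁, Z₂, hZ₂, h₁, hm₁⟩ := exists_residual C _ _ hZ₁
  obtain ⟨w₂, hw₂, Z₃, hZ₃, h₂, -⟩ := exists_residual C _ _ hZ₂
  have h₃ : Z₃.card = 0 := by rw [hZ₃.eq_empty, Finset.card_empty]
  refine ⟨_, wtOn Z₁ w₁, wtOn Z₂ w₂, ?_, hm₀ _ hw₁, hm₁ _ hw₂, ?_⟩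
  · rw [Finset.card_univ, Fintype.card_fin] at h₀
    omega
  · obtain ⟨x, rfl⟩ := hw₀
    rw [wtOn_univ]
    have := Finset.le_sup (f := fun x : Fin n → ZMod 2 => hammingNorm (W.mulVec x + 0))
      (Finset.mem_univ x)
    simpa [Mfun] using this

/-- `Attains n t` says that `μ(n,4) ≤ t`. -/
def Attains (n t : ℕ) : Prop := ∃ W ∈ Aset n 4, Mfun W 0 ≤ t

theorem hammingNorm_append {a b : ℕ} (u : Fin (a + b) → ZMod 2) :
    hammingNorm u = hammingNorm (fun i => u (Fin.castAdd b i)) +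
      hammingNorm (fun i => u (Fin.natAdd a i)) := by
  simp only [hammingNorm, Finset.card_filter]
  exact Fin.sum_univ_add _

/-- Block diagonal sums. -/
theorem Attains.add {a b s t : ℕ} (h₁ : Attains a s) (h₂ : Attains b t) :
    Attains (a + b) (s + t) := by
  obtain ⟨A, ⟨hA, hA'⟩, hAs⟩ := h₁
  obtain ⟨B, ⟨hB, hB'⟩, hBt⟩ := h₂
  let W : Matrix (Fin (a + b)) (Fin (a + b)) (ZMod 2) :=
    (Matrix.fromBlocks A 0 0 B).submatrix finSumFinEquiv.symm finSumFinEquiv.symm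
  refine ⟨W, ⟨fun i => ?_, fun j => ?_⟩, Finset.sup_le fun x _ => ?_⟩
  · refine Fin.addCases (fun i => ?_) (fun i => ?_) i <;> simp [W, hA, hB]
  · rw [hammingNorm_append]
    refine Fin.addCases (fun j => ?_) (fun j => ?_) j
    · simpa [W, hammingNorm] using hA' j
    · simpa [W, hammingNorm] using hB' j
  · rw [hammingNorm_append]
    refine add_le_add (le_trans ?_ hAs) (le_trans ?_ hBt)
    · have := Finset.le_sup (f := fun x : Fin a → ZMod 2 => hammingNorm (A.mulVec x + 0))
        (Finset.mem_univ fun i => x (Fin.castAdd b i))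
      refine le_trans (le_of_eq ?_) this
      congr 1
      ext i
      simp [W, Matrix.mulVec, dotProduct, Fin.sum_univ_add]
    · have := Finset.le_sup (f := fun x : Fin b → ZMod 2 => hammingNorm (B.mulVec x + 0))
        (Finset.mem_univ fun i => x (Fin.natAdd a i))
      refine le_trans (le_of_eq ?_) this
      congr 1
      ext i
      simp [W, Matrix.mulVec, dotProduct, Fin.sum_univ_add]

theorem attains_zero : Attains 0 0 := by
  refine ⟨0, ⟨fun i => i.elim0, fun j => j.elim0⟩, Finset.sup_le fun x _ => ?_⟩
  simp [hammingNorm]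

theorem attains_one : Attains 1 1 := by
  refine ⟨1, ⟨by decide, by decide⟩, Finset.sup_le fun x _ => ?_⟩
  exact hammingNorm_le_card_fintype

theorem attains_three : Attains 3 2 := by
  refine ⟨Matrix.of fun i j => if i = j ∨ i = j + 1 then 1 else 0,
    ⟨by decide, by decide⟩, Finset.sup_le fun x _ => ?_⟩
  revert x
  decide +kernel

/-- The columns are the cyclic shifts of `{0, 3, 5, 6}`, the complements of the lines
`{1, 2, 4} + j` of the Fano plane; with zero they form the simplex code of length 7. -/
theorem attains_seven : Attains 7 4 := by
  refine ⟨Matrix.of fun i j => if i - j ∈ ({0, 3, 5, 6} : Finset (Fin 7)) then 1 else 0,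
    ⟨by decide, by decide⟩, Finset.sup_le fun x _ => ?_⟩
  revert x
  decide +kernel

theorem attains_all (n : ℕ) :
    Attains n (if n % 7 = 5 then (4 * n + 6) / 7 + 1 else (4 * n + 6) / 7) := by
  induction n using Nat.strong_induction_on with
  | _ n ih =>
    by_cases h : n < 7
    · interval_cases n
      · exact attains_zero
      · exact attains_one
      · exact attains_one.add attains_one
      · exact attains_three
      · exact attains_three.add attains_one
      · exact attains_three.add (attains_one.add attains_one)
      · exact attains_three.add attains_three
    · obtain ⟨r, rfl⟩ : ∃ r, n = r + 7 := ⟨n - 7, by omega⟩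
      convert (ih r (by omega)).add attains_seven using 1
      split_ifs <;> omega

/-- Theorem 1.1(a): for `j = 4, 5`, `μ(n,j) = ⌈4n/7⌉` unless `n = 7k−2`, in which case
`μ(n,j) = ⌈4n/7⌉ + 1 = 4k`.  (Note `⌈4n/7⌉ = (4n+6)/7` in natural division.) -/
theorem mu_four_five (j : ℕ) (hj : j = 4 ∨ j = 5) (n : ℕ) (hn : 1 ≤ n) :
    ((¬ ∃ k : ℕ, 1 ≤ k ∧ n = 7 * k - 2) → mu n j = (4 * n + 6) / 7) ∧
    (∀ k : ℕ, 1 ≤ k → n = 7 * k - 2 →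
      mu n j = (4 * n + 6) / 7 + 1 ∧ mu n j = 4 * k) := by
  have h45 : Aset n j ⊆ Aset n 5 := fun W hW => ⟨hW.1, fun i => (hW.2 i).trans (by omega)⟩
  have h4 : Aset n 4 ⊆ Aset n j := fun W hW => ⟨hW.1, fun i => (hW.2 i).trans (by omega)⟩
  obtain ⟨W₀, hW₀, hU⟩ := attains_all n
  have hup := (show mu n j ≤ Mfun W₀ 0 from Nat.sInf_le ⟨W₀, h4 hW₀, rfl⟩).trans hU
  -- The image is nonempty, so its infimum is a genuine value `M(W,0)`.
  obtain ⟨W, hW, hmu⟩ := Nat.sInf_mem (s := (fun W => Mfun W 0) '' Aset n j)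
    ⟨_, W₀, h4 hW₀, rfl⟩
  obtain ⟨a, b, c, hn', hab, hbc, ha⟩ := exists_decomposition (h45 hW)
  replace ha : a ≤ mu n j := ha.trans (le_of_eq hmu)
  constructor
  · intro hk
    have h5 : n % 7 ≠ 5 := fun h5 => hk ⟨n / 7 + 1, by omega, by omega⟩
    rw [if_neg h5] at hup
    omega
  · intro k hk hnk
    rw [if_pos (by omega)] at hup
    omega
end

section
/- For every integer n ≥ 4, μ*(n,4) = 2·⌈2n/7⌉; equivalently, μ*(n,4) is the least even integer that is not less than μ(n,4). -/
/-!
Both bounds concern the binary code `C` spanned by the columns of `W`: since the column at `i`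
contains `i`, this is a code in which every coordinate lies in a generator of weight at most 4, and
`M(W,0)` is its maximal weight.

Lower bound (`exists_heavy_word`): the maximal weight is at least `4n/7`, by strong induction on
the set of coordinates. Let `S` be the joint support of a few generators. By induction some word
`c` is heavy enough off `S`, and adding combinations of these generators changes `c` only on `S`,
where the weight averages `|S|/2`. Hence some translate has weight at least `⌈|S|/2⌉` on `S`, which
suffices when `|S|` is 1, 3, 5 or 7; and if the whole code is even on `S`, parity also settles
`|S| = 2` and `|S| = 6`. Otherwise any two generators meet evenly, since an odd intersection would
give an odd `|S|` up to 7; a generator that is odd on some `S` with `|S| = 6` would likewise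
produce the size 7. So all generators have weight 0 or 4, and the supports of two nonzero ones are
equal or disjoint. Then the code is constant on each of
these supports, and the value there can be made 1.

When all columns have weight exactly 4 the code is even, so `M(W,0)` is at least the least even
number not below `4n/7`, which is `2⌈2n/7⌉`.

Upper bound (`good_fin`): blocks of length 7 spanned by the simplex code contribute 4 each; the
remaining block, of length 4 to 10, is an explicit small code, for lengths 8, 9, 10 generated by
vertex stars, hence consisting of cuts, of a graph on four or five vertices.
-/

open Matrix

/-! ### Lower bound: a code covered by words of weight at most four -/

section Lower

variable {ι : Type*}

/-- The support of the word `u`, read only on the coordinates in `X`. -/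
def suppOn (X : Finset ι) (u : ι → ZMod 2) : Finset ι := X.filter fun i => u i ≠ 0

/-- The linear combination of the words `u, v, w` with coefficient vector `t`. -/
def comb (u v w : ι → ZMod 2) (t : ZMod 2 × ZMod 2 × ZMod 2) : ι → ZMod 2 :=
  t.1 • u + t.2.1 • v + t.2.2 • w

lemma comb_mem {G : Set (ι → ZMod 2)} {u v w : ι → ZMod 2} (hu : u ∈ G) (hv : v ∈ G)
    (hw : w ∈ G) (t : ZMod 2 × ZMod 2 × ZMod 2) :
    comb u v w t ∈ Submodule.span (ZMod 2) G :=
  add_mem (add_mem (Submodule.smul_mem _ _ (Submodule.subset_span hu))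
    (Submodule.smul_mem _ _ (Submodule.subset_span hv)))
    (Submodule.smul_mem _ _ (Submodule.subset_span hw))

lemma card_suppOn_cast (S : Finset ι) (c : ι → ZMod 2) :
    ((suppOn S c).card : ZMod 2) = ∑ i ∈ S, c i := by
  rw [suppOn, Finset.card_filter]
  push_cast
  refine Finset.sum_congr rfl fun i _ => ?_
  generalize c i = a
  revert a
  decide

lemma even_suppOn_iff (S : Finset ι) (c : ι → ZMod 2) :
    Even (suppOn S c).card ↔ ∑ i ∈ S, c i = 0 := by
  rw [← card_suppOn_cast, ZMod.natCast_eq_zero_iff_even]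

/-- If every generator has even weight on `S`, so has every word of the code. -/
lemma even_suppOn_of_mem_span {G : Set (ι → ZMod 2)} {S : Finset ι}
    (h : ∀ g ∈ G, Even (suppOn S g).card) {c : ι → ZMod 2}
    (hc : c ∈ Submodule.span (ZMod 2) G) : Even (suppOn S c).card := by
  rw [even_suppOn_iff]
  induction hc using Submodule.span_induction with
  | mem x hx => exact (even_suppOn_iff S x).1 (h x hx)
  | zero => simp
  | add x y _ _ hx hy => simp [Finset.sum_add_distrib, hx, hy]
  | smul a x _ hx => simp [← Finset.mul_sum, hx]

variable [DecidableEq ι]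

/-- On a coordinate where one of `u, v, w` is nonzero, exactly half of the eight translates of
`c` are nonzero; so the average weight of the translates on the joint support `S` is `|S| / 2`,
and some translate reaches it. -/
lemma exists_half (X : Finset ι) (u v w c : ι → ZMod 2) :
    ∃ t, (suppOn X u ∪ suppOn X v ∪ suppOn X w).card ≤
      2 * (suppOn (suppOn X u ∪ suppOn X v ∪ suppOn X w) (c + comb u v w t)).card := by
  set S := suppOn X u ∪ suppOn X v ∪ suppOn X w with hS
  have hsum : ∑ t : ZMod 2 × ZMod 2 × ZMod 2, (suppOn S (c + comb u v w t)).card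
      = 4 * S.card := by
    simp only [suppOn, Finset.card_filter]
    rw [Finset.sum_comm, Finset.card_eq_sum_ones, Finset.mul_sum]
    refine Finset.sum_congr rfl fun i hi => ?_
    have hi' : u i ≠ 0 ∨ v i ≠ 0 ∨ w i ≠ 0 := by
      simp only [hS, suppOn, Finset.mem_union, Finset.mem_filter] at hi
      tauto
    have key : ∀ a b d e : ZMod 2, (a ≠ 0 ∨ b ≠ 0 ∨ d ≠ 0) →
        ∑ t : ZMod 2 × ZMod 2 × ZMod 2,
          (if e + (t.1 * a + t.2.1 * b + t.2.2 * d) ≠ 0 then 1 else 0) = 4 * 1 := by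
      decide
    simp only [comb, Pi.add_apply, Pi.smul_apply, smul_eq_mul]
    convert key (u i) (v i) (w i) (c i) hi'
    exact if_congr Iff.rfl rfl rfl
  by_contra! h
  have h2 : ∑ t : ZMod 2 × ZMod 2 × ZMod 2, 2 * (suppOn S (c + comb u v w t)).card
      < ∑ _t : ZMod 2 × ZMod 2 × ZMod 2, S.card :=
    Finset.sum_lt_sum_of_nonempty Finset.univ_nonempty fun t _ => h t
  rw [← Finset.mul_sum, hsum] at h2
  have h8 : Fintype.card (ZMod 2 × ZMod 2 × ZMod 2) = 8 := by decide
  simp only [Finset.sum_const, Finset.card_univ, h8, smul_eq_mul] at h2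
  omega

lemma suppOn_suppOn {X S : Finset ι} (hS : S ⊆ X) (g : ι → ZMod 2) :
    suppOn S g = suppOn X g ∩ S := by
  ext i
  simp only [suppOn, Finset.mem_filter, Finset.mem_inter]
  constructor
  · rintro ⟨h1, h2⟩; exact ⟨⟨hS h1, h2⟩, h1⟩
  · rintro ⟨⟨_, h2⟩, h1⟩; exact ⟨h1, h2⟩

/-- Gluing step of the induction: a word that is good off `S` may be corrected on `S` by a word
vanishing on `X \ S`. -/
lemma glue {X S : Finset ι} (hS : S ⊆ X) {c d : ι → ZMod 2}
    (hd : ∀ i ∈ X \ S, d i = 0)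
    (h1 : 4 * (X \ S).card ≤ 7 * (suppOn (X \ S) c).card)
    (h2 : 4 * S.card ≤ 7 * (suppOn S (c + d)).card) :
    4 * X.card ≤ 7 * (suppOn X (c + d)).card := by
  have e1 : suppOn (X \ S) (c + d) = suppOn (X \ S) c := by
    refine Finset.filter_congr fun i hi => ?_
    simp [hd i hi]
  have e2 : (suppOn X (c + d)).card
      = (suppOn (X \ S) (c + d)).card + (suppOn S (c + d)).card := by
    rw [suppOn, suppOn, suppOn, ← Finset.card_union_of_disjoint
      (Finset.disjoint_filter_filter Finset.sdiff_disjoint), ← Finset.filter_union,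
      Finset.sdiff_union_of_subset hS]
  have e3 := Finset.card_sdiff_add_card_eq_card hS
  rw [e2, e1]
  omega

lemma comb_eq_zero {X : Finset ι} {u v w : ι → ZMod 2} (t : ZMod 2 × ZMod 2 × ZMod 2) {i : ι}
    (hi : i ∈ X \ (suppOn X u ∪ suppOn X v ∪ suppOn X w)) : comb u v w t i = 0 := by
  simp only [suppOn, Finset.mem_sdiff, Finset.mem_union, Finset.mem_filter] at hi
  have hu : u i = 0 := by tauto
  have hv : v i = 0 := by tauto
  have hw : w i = 0 := by tauto
  simp [comb, hu, hv, hw]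

/-- If the generators have weight at most four on `X` and cover `X`, then some word of the code
has weight at least `4|X|/7` on `X`. -/
theorem exists_heavy_word (G : Set (ι → ZMod 2)) (X : Finset ι)
    (hwt : ∀ g ∈ G, (suppOn X g).card ≤ 4) (hcov : ∀ i ∈ X, ∃ g ∈ G, g i ≠ 0) :
    ∃ c ∈ Submodule.span (ZMod 2) G, 4 * X.card ≤ 7 * (suppOn X c).card := by
  induction hN : X.card using Nat.strong_induction_on generalizing X with
  | _ N ih =>
  subst hN
  by_contra! hno
  -- The induction hypothesis on `X \ S`, for any nonempty `S ⊆ X`.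
  have hrec : ∀ S ⊆ X, S.Nonempty → ∃ c ∈ Submodule.span (ZMod 2) G,
      4 * (X \ S).card ≤ 7 * (suppOn (X \ S) c).card := by
    intro S hS hne
    refine ih _ (Finset.card_lt_card (Finset.sdiff_ssubset hS hne)) (X \ S) (fun g hg => ?_)
      (fun i hi => hcov i (Finset.mem_sdiff.1 hi).1) rfl
    exact (Finset.card_le_card (Finset.filter_subset_filter _ Finset.sdiff_subset)).trans
      (hwt g hg)
  have hsub : ∀ g, suppOn X g ⊆ X := fun g => Finset.filter_subset _ _
  have hsub3 : ∀ u v w, suppOn X u ∪ suppOn X v ∪ suppOn X w ⊆ X := fun u v w =>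
    Finset.union_subset (Finset.union_subset (hsub u) (hsub v)) (hsub w)
  -- Odd joint supports of size at most 7 are excluded, as `⌈s/2⌉ ≥ 4s/7` for `s = 1, 3, 5, 7`.
  have hA : ∀ u ∈ G, ∀ v ∈ G, ∀ w ∈ G,
      Odd (suppOn X u ∪ suppOn X v ∪ suppOn X w).card →
      7 < (suppOn X u ∪ suppOn X v ∪ suppOn X w).card := by
    intro u hu v hv w hw hodd
    by_contra! hle
    obtain ⟨c, hc, hc4⟩ := hrec _ (hsub3 u v w)
      (Finset.card_pos.1 (by obtain ⟨k, hk⟩ := hodd; omega))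
    obtain ⟨t, ht⟩ := exists_half X u v w c
    refine absurd (glue (d := comb u v w t) (hsub3 u v w)
      (fun i hi => comb_eq_zero t hi) hc4 ?_)
      (not_le.2 (hno _ (add_mem hc (comb_mem hu hv hw t))))
    obtain ⟨k, hk⟩ := hodd
    omega
  -- For joint supports of size 2 or 6 on which the code is even, parity lifts the average
  -- 1 or 3 to a weight of at least 2 or 4.
  have hB : ∀ u ∈ G, ∀ v ∈ G, ((suppOn X u ∪ suppOn X v).card = 2 ∨
      (suppOn X u ∪ suppOn X v).card = 6) →
      ∃ g ∈ G, Odd (suppOn X g ∩ (suppOn X u ∪ suppOn X v)).card := by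
    intro u hu v hv hcard
    by_contra! hev
    have hS := hsub3 u v v
    have huv : suppOn X u ∪ suppOn X v ∪ suppOn X v = suppOn X u ∪ suppOn X v := by
      rw [Finset.union_assoc, Finset.union_self]
    have hhalf := exists_half X u v v
    have hz : ∀ t, ∀ i ∈ X \ (suppOn X u ∪ suppOn X v ∪ suppOn X v), comb u v v t i = 0 :=
      fun t i hi => comb_eq_zero t hi
    rw [huv] at hS hz
    simp only [huv] at hhalf
    obtain ⟨c, hc, hc4⟩ := hrec _ hS (Finset.card_pos.1 (by omega))
    obtain ⟨t, ht⟩ := hhalf c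
    have hmem := add_mem hc (comb_mem hu hv hv t)
    refine absurd (glue hS (hz t) hc4 ?_) (not_le.2 (hno _ hmem))
    have hE := even_suppOn_of_mem_span (S := suppOn X u ∪ suppOn X v) (fun g hg => by
      rw [suppOn_suppOn hS]
      exact Nat.not_odd_iff_even.1 (hev g hg)) hmem
    obtain ⟨k, hk⟩ := hE
    omega
  have hA2 : ∀ u ∈ G, ∀ v ∈ G, Odd (suppOn X u ∪ suppOn X v).card →
      7 < (suppOn X u ∪ suppOn X v).card := by
    intro u hu v hv h
    have := hA u hu v hv v hv
    rw [Finset.union_assoc, Finset.union_self] at this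
    exact this h
  have hA1 : ∀ u ∈ G, Even (suppOn X u).card := by
    intro u hu
    by_contra h
    have := hA2 u hu u hu
    rw [Finset.union_self] at this
    have h1 := this (Nat.not_even_iff_odd.1 h)
    have h2 := hwt u hu
    omega
  -- Two generators always meet evenly.
  have hmeet : ∀ u ∈ G, ∀ v ∈ G, Even (suppOn X u ∩ suppOn X v).card := by
    intro u hu v hv
    by_contra h
    have h := Nat.not_even_iff_odd.1 h
    have h0 := hA2 u hu v hv
    have h1 := Finset.card_union_add_card_inter (suppOn X u) (suppOn X v)
    obtain ⟨a, ha⟩ := hA1 u hu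
    obtain ⟨b, hb⟩ := hA1 v hv
    obtain ⟨k, hk⟩ := h
    have h3 := hwt u hu
    have h4 := hwt v hv
    have h5 := h0 ⟨a + b - k - 1, by omega⟩
    omega
  have hne2 : ∀ u ∈ G, (suppOn X u).card ≠ 2 := by
    intro u hu h2
    obtain ⟨g, hg, hodd⟩ := hB u hu u hu (by simp [h2])
    rw [Finset.union_self] at hodd
    exact Nat.not_even_iff_odd.2 hodd (hmeet g hg u hu)
  have hne6 : ∀ u ∈ G, ∀ v ∈ G, (suppOn X u ∪ suppOn X v).card ≠ 6 := by
    intro u hu v hv h6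
    obtain ⟨g, hg, hodd⟩ := hB u hu v hv (Or.inr h6)
    have h7 := hA u hu v hv g hg
    have h1 := Finset.card_union_add_card_inter (suppOn X u ∪ suppOn X v) (suppOn X g)
    rw [Finset.inter_comm] at h1
    have hu1 : (suppOn X g ∩ suppOn X u).card ≤
        (suppOn X g ∩ (suppOn X u ∪ suppOn X v)).card :=
      Finset.card_le_card (Finset.inter_subset_inter_left Finset.subset_union_left)
    have hv1 : (suppOn X g ∩ suppOn X v).card ≤
        (suppOn X g ∩ (suppOn X u ∪ suppOn X v)).card :=
      Finset.card_le_card (Finset.inter_subset_inter_left Finset.subset_union_right)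
    have huv : (suppOn X g ∩ (suppOn X u ∪ suppOn X v)).card ≤
        (suppOn X g ∩ suppOn X u).card + (suppOn X g ∩ suppOn X v).card := by
      rw [Finset.inter_union_distrib_left]
      exact Finset.card_union_le _ _
    obtain ⟨a, ha⟩ := hmeet g hg u hu
    obtain ⟨b, hb⟩ := hmeet g hg v hv
    obtain ⟨d, hd⟩ := hA1 g hg
    have hg4 := hwt g hg
    obtain ⟨k, hk⟩ := hodd
    have h8 := h7 ⟨d + 3 - k - 1, by omega⟩
    omega
  -- So the supports of two generators are disjoint or equal, and the code restricted to a
  -- generator is a repetition code.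
  have hX : X.Nonempty := by
    by_contra h
    rw [Finset.not_nonempty_iff_eq_empty] at h
    have := hno 0 (zero_mem _)
    simp [h] at this
  obtain ⟨i, hi⟩ := hX
  obtain ⟨u, hu, hui⟩ := hcov i hi
  have hiu : i ∈ suppOn X u := Finset.mem_filter.2 ⟨hi, hui⟩
  have hu4 : (suppOn X u).card = 4 := by
    have h1 := hwt u hu
    have h2 := hne2 u hu
    obtain ⟨a, ha⟩ := hA1 u hu
    have h3 := Finset.card_pos.2 ⟨i, hiu⟩
    omega
  have hgen : ∀ g ∈ G, suppOn X g ∩ suppOn X u = ∅ ∨ suppOn X u ⊆ suppOn X g := by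
    intro g hg
    have h1 := Finset.card_union_add_card_inter (suppOn X g) (suppOn X u)
    have h6 := hne6 g hg u hu
    obtain ⟨k, hk⟩ := hmeet g hg u hu
    obtain ⟨a, ha⟩ := hA1 g hg
    have h2 := hne2 g hg
    have hg4 := hwt g hg
    have hle := Finset.card_le_card
      (Finset.inter_subset_left : suppOn X g ∩ suppOn X u ⊆ suppOn X g)
    rcases Nat.eq_zero_or_pos (suppOn X g ∩ suppOn X u).card with h0 | h0
    · exact Or.inl (Finset.card_eq_zero.1 h0)
    · right
      have : suppOn X g ∩ suppOn X u = suppOn X u :=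
        Finset.eq_of_subset_of_card_le Finset.inter_subset_right (by omega)
      exact Finset.inter_eq_right.1 this
  have hconst : ∀ c ∈ Submodule.span (ZMod 2) G, ∀ j ∈ suppOn X u, c j = c i := by
    intro c hc j hj
    have two : ∀ a b : ZMod 2, a ≠ 0 → b ≠ 0 → a = b := by decide
    induction hc using Submodule.span_induction with
    | mem g hg =>
      rcases hgen g hg with h | h
      · have hz : ∀ k ∈ suppOn X u, g k = 0 := by
          intro k hk
          by_contra hk'
          have : k ∈ suppOn X g ∩ suppOn X u :=
            Finset.mem_inter.2 ⟨Finset.mem_filter.2 ⟨hsub u hk, hk'⟩, hk⟩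
          simp [h] at this
        rw [hz j hj, hz i hiu]
      · exact two _ _ (Finset.mem_filter.1 (h hj)).2 (Finset.mem_filter.1 (h hiu)).2
    | zero => rfl
    | add x y _ _ hx hy => simp [hx, hy]
    | smul a x _ hx => simp [hx]
  obtain ⟨c, hc, hc4⟩ := hrec (suppOn X u) (hsub u) ⟨i, hiu⟩
  -- Adding a multiple of `u` makes the word constantly 1 on the support of `u`.
  have hmem : c + (1 + c i) • u ∈ Submodule.span (ZMod 2) G :=
    add_mem hc (Submodule.smul_mem _ _ (Submodule.subset_span hu))
  refine absurd (glue (hsub u) (fun j hj => ?_) hc4 ?_) (not_le.2 (hno _ hmem))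
  · have hj' := Finset.mem_sdiff.1 hj
    have : u j = 0 := by
      by_contra h
      exact hj'.2 (Finset.mem_filter.2 ⟨hj'.1, h⟩)
    simp [this]
  · have : suppOn (suppOn X u) (c + (1 + c i) • u) = suppOn X u := by
      refine Finset.filter_true_of_mem fun j hj => ?_
      have key : ∀ a b : ZMod 2, b ≠ 0 → a + (1 + a) * b ≠ 0 := by decide
      simpa [hconst c hc j hj] using key (c i) (u j) (Finset.mem_filter.1 hj).2
    rw [this]
    omega

end Lower

lemma hammingNorm_eq_suppOn {n : ℕ} (c : Fin n → ZMod 2) :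
    hammingNorm c = (suppOn Finset.univ c).card := rfl

lemma le_Mfun {n : ℕ} {W : Matrix (Fin n) (Fin n) (ZMod 2)} (hW : W ∈ Aset n 4) :
    4 * n ≤ 7 * Mfun W 0 := by
  obtain ⟨c, hc, h⟩ := exists_heavy_word (Set.range W.col) Finset.univ
    (by rintro _ ⟨j, rfl⟩; exact hW.2 j)
    (fun i _ => ⟨W.col i, ⟨i, rfl⟩, by simp [Matrix.col, hW.1 i]⟩)
  rw [← Matrix.range_mulVecLin] at hc
  obtain ⟨x, rfl⟩ := hc
  have hle : hammingNorm (W.mulVec x + 0) ≤ Mfun W 0 :=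
    Finset.le_sup (f := fun x : Fin n → ZMod 2 => hammingNorm (W.mulVec x + 0))
      (Finset.mem_univ x)
  rw [add_zero, hammingNorm_eq_suppOn] at hle
  rw [Finset.card_univ, Fintype.card_fin, Matrix.mulVecLin_apply] at h
  omega

lemma even_Mfun {n : ℕ} {W : Matrix (Fin n) (Fin n) (ZMod 2)} (hW : W ∈ AstarSet n 4) :
    Even (Mfun W 0) := by
  obtain ⟨x, -, hx⟩ := Finset.exists_mem_eq_sup Finset.univ Finset.univ_nonempty
    (fun x : Fin n → ZMod 2 => hammingNorm (W.mulVec x + 0))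
  rw [Mfun, hx, add_zero, hammingNorm_eq_suppOn]
  refine even_suppOn_of_mem_span (G := Set.range W.col) ?_ ?_
  · rintro _ ⟨j, rfl⟩
    have h : (suppOn Finset.univ (W.col j)).card = 4 := hW.2 j
    rw [h]
    decide
  · rw [← Matrix.range_mulVecLin]
    exact ⟨x, rfl⟩

/-! ### Upper bound: block-diagonal matrices -/

/-- There is a matrix indexed by `ι` with unit diagonal and all columns of weight four, such
that every sum of its columns has weight at most `b`. -/
def Good (ι : Type) [Fintype ι] (b : ℕ) : Prop :=
  ∃ W : Matrix ι ι (ZMod 2), (∀ i, W i i = 1) ∧ (∀ j, hammingNorm (fun i => W i j) = 4) ∧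
    ∀ x, hammingNorm (W.mulVec x) ≤ b

lemma hammingNorm_sumType {ι κ : Type} [Fintype ι] [Fintype κ] (c : ι ⊕ κ → ZMod 2) :
    hammingNorm c = hammingNorm (c ∘ Sum.inl) + hammingNorm (c ∘ Sum.inr) := by
  simp only [hammingNorm, Finset.card_filter, Fintype.sum_sum_type, Function.comp]

lemma Good.sum {ι κ : Type} [Fintype ι] [Fintype κ] {a b : ℕ} (hι : Good ι a)
    (hκ : Good κ b) : Good (ι ⊕ κ) (a + b) := by
  obtain ⟨A, hA1, hA2, hA3⟩ := hι
  obtain ⟨B, hB1, hB2, hB3⟩ := hκ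
  refine ⟨Matrix.fromBlocks A 0 0 B, ?_, ?_, fun x => ?_⟩
  · rintro (i | i)
    · exact hA1 i
    · exact hB1 i
  · rintro (j | j)
    · rw [hammingNorm_sumType, ← hA2 j]
      exact add_eq_left.2 (hammingNorm_eq_zero.2 rfl)
    · rw [hammingNorm_sumType, ← hB2 j]
      exact add_eq_right.2 (hammingNorm_eq_zero.2 rfl)
  · rw [Matrix.fromBlocks_mulVec, hammingNorm_sumType]
    simpa using add_le_add (hA3 (x ∘ Sum.inl)) (hB3 (x ∘ Sum.inr))

lemma hammingNorm_comp_equiv {ι κ : Type} [Fintype ι] [Fintype κ] (e : κ ≃ ι)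
    (c : ι → ZMod 2) : hammingNorm (c ∘ e) = hammingNorm c := by
  simp only [hammingNorm, Finset.card_filter, Function.comp]
  exact Equiv.sum_comp e fun i => if c i ≠ 0 then 1 else 0

lemma Good.congr {ι κ : Type} [Fintype ι] [Fintype κ] {a : ℕ} (h : Good ι a) (e : κ ≃ ι) :
    Good κ a := by
  obtain ⟨A, hA1, hA2, hA3⟩ := h
  refine ⟨A.submatrix e e, fun i => hA1 _, fun j => ?_, fun x => ?_⟩
  · rw [← hA2 (e j)]
    exact hammingNorm_comp_equiv e fun i => A i (e j)
  · rw [Matrix.submatrix_mulVec_equiv, hammingNorm_comp_equiv]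
    exact hA3 _

/-- A code spanned by four words of weight four which cover all coordinates yields a matrix:
the column at `j` is one of the four words that contains `j`. -/
lemma good_of_words {s b : ℕ} (g : Fin 4 → Fin s → ZMod 2) (hg : ∀ k, hammingNorm (g k) = 4)
    (hc : ∀ j, ∃ k, g k j = 1)
    (hb : ∀ y₀ y₁ y₂ y₃ : ZMod 2,
      hammingNorm (fun i => y₀ * g 0 i + y₁ * g 1 i + y₂ * g 2 i + y₃ * g 3 i) ≤ b) :
    Good (Fin s) b := by
  choose f hf using hc
  refine ⟨fun i j => g (f j) i, hf, fun j => hg (f j), fun x => ?_⟩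
  let y : Fin 4 → ZMod 2 := fun k => ∑ j, if f j = k then x j else 0
  convert hb (y 0) (y 1) (y 2) (y 3) using 2
  ext i
  have h : ∑ k, y k * g k i = ∑ j, g (f j) i * x j := by
    simp only [y, Finset.sum_mul]
    rw [Finset.sum_comm]
    simp [mul_comm]
  rw [Fin.sum_univ_four] at h
  exact h.symm

lemma good_four : Good (Fin 4) 4 :=
  good_of_words (fun _ => ![1, 1, 1, 1]) (by decide) (by decide) (by decide)

lemma good_five : Good (Fin 5) 4 :=
  good_of_words ![![1, 1, 1, 1, 0], ![0, 1, 1, 1, 1], ![0, 1, 1, 1, 1], ![0, 1, 1, 1, 1]]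
    (by decide) (by decide) (by decide)

lemma good_six : Good (Fin 6) 4 :=
  good_of_words ![![1, 1, 1, 1, 0, 0], ![0, 0, 1, 1, 1, 1], ![0, 0, 1, 1, 1, 1],
    ![0, 0, 1, 1, 1, 1]] (by decide) (by decide) (by decide)

/-- The simplex code of length 7, all of whose nonzero words have weight 4. -/
lemma good_seven : Good (Fin 7) 4 :=
  good_of_words ![![1, 1, 1, 1, 0, 0, 0], ![0, 0, 1, 1, 1, 1, 0], ![1, 0, 1, 0, 1, 0, 1],
    ![1, 0, 1, 0, 1, 0, 1]] (by decide) (by decide) (by decide)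

/-- The cuts of `K₄` with the two edges of a perfect matching doubled. -/
lemma good_eight : Good (Fin 8) 6 :=
  good_of_words ![![1, 1, 0, 0, 1, 1, 0, 0], ![1, 1, 0, 0, 0, 0, 1, 1],
    ![0, 0, 1, 1, 1, 0, 1, 0], ![0, 0, 1, 1, 0, 1, 0, 1]] (by decide) (by decide) (by decide)

/-- Cuts of `K₅` minus an edge, generated by the stars of the three vertices of degree 4. -/
lemma good_nine : Good (Fin 9) 6 :=
  good_of_words ![![1, 1, 0, 1, 1, 0, 0, 0, 0], ![1, 0, 1, 0, 0, 1, 1, 0, 0],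
    ![0, 1, 1, 0, 0, 0, 0, 1, 1], ![0, 1, 1, 0, 0, 0, 0, 1, 1]]
    (by decide) (by decide) (by decide)

/-- The cuts of `K₅`, generated by four of its stars. -/
lemma good_ten : Good (Fin 10) 6 :=
  good_of_words ![![1, 1, 1, 1, 0, 0, 0, 0, 0, 0], ![1, 0, 0, 0, 1, 1, 1, 0, 0, 0],
    ![0, 1, 0, 0, 1, 0, 0, 1, 1, 0], ![0, 0, 1, 0, 0, 1, 0, 1, 0, 1]]
    (by decide) (by decide) (by decide)

/-- Seven more coordinates cost 4, by adding a simplex block. -/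
lemma good_fin (n : ℕ) (hn : 4 ≤ n) : Good (Fin n) (2 * ((2 * n + 6) / 7)) := by
  induction n using Nat.strong_induction_on with
  | _ n ih =>
  rcases Nat.lt_or_ge n 11 with h | h
  · interval_cases n
    exacts [good_four, good_five, good_six, good_seven, good_eight, good_nine, good_ten]
  · obtain ⟨m, rfl⟩ : ∃ m, n = m + 7 := ⟨n - 7, by omega⟩
    have h7 := ((ih m (by omega) (by omega)).sum good_seven).congr finSumFinEquiv.symm
    have he : 2 * ((2 * m + 6) / 7) + 4 = 2 * ((2 * (m + 7) + 6) / 7) := by omega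
    rwa [he] at h7

/-- Theorem 1.1(b): for `n ≥ 4`, `μ*(n,4) = 2⌈2n/7⌉` is the least even integer not less
than `μ(n,4)`.  (Note `⌈2n/7⌉ = (2n+6)/7` in natural division.) -/
theorem muStar_four (n : ℕ) (hn : 4 ≤ n) :
    muStar n 4 = 2 * ((2 * n + 6) / 7) ∧
    muStar n 4 = sInf {t : ℕ | 2 ∣ t ∧ mu n 4 ≤ t} := by
  obtain ⟨W, hW1, hW2, hW3⟩ := good_fin n hn
  have hWs : W ∈ AstarSet n 4 := ⟨hW1, hW2⟩
  have hWb : Mfun W 0 ≤ 2 * ((2 * n + 6) / 7) :=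
    Finset.sup_le fun x _ => by rw [add_zero]; exact hW3 x
  have hWa : W ∈ Aset n 4 := ⟨hW1, fun j => (hW2 j).le⟩
  have hstar : muStar n 4 = 2 * ((2 * n + 6) / 7) := by
    refine le_antisymm ((Nat.sInf_le (Set.mem_image_of_mem (fun W => Mfun W 0) hWs)).trans hWb) ?_
    obtain ⟨V, hV, hVe⟩ : muStar n 4 ∈ (fun W => Mfun W 0) '' AstarSet n 4 :=
      Nat.sInf_mem ⟨_, Set.mem_image_of_mem _ hWs⟩
    have h1 := le_Mfun (W := V) ⟨hV.1, fun j => (hV.2 j).le⟩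
    obtain ⟨k, hk⟩ := even_Mfun hV
    simp only at hVe
    omega
  have hmu : 4 * n ≤ 7 * mu n 4 := by
    obtain ⟨V, hV, hVe⟩ : mu n 4 ∈ (fun W => Mfun W 0) '' Aset n 4 :=
      Nat.sInf_mem ⟨_, Set.mem_image_of_mem _ hWa⟩
    have h1 := le_Mfun hV
    simp only at hVe
    omega
  have hle : mu n 4 ≤ 2 * ((2 * n + 6) / 7) :=
    (Nat.sInf_le (Set.mem_image_of_mem (fun W => Mfun W 0) hWa)).trans hWb
  refine ⟨hstar, ?_⟩
  rw [hstar]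
  refine le_antisymm ?_ (Nat.sInf_le ⟨⟨_, rfl⟩, hle⟩)
  refine le_csInf ⟨_, ⟨_, rfl⟩, hle⟩ ?_
  rintro t ⟨⟨k, rfl⟩, ht⟩
  omega
end

section
/- The limit as n → ∞ of μ(n)/n exists and equals 1/2. -/
/-!
A nonzero linear functional on a finite `𝔽₂`-space takes the value `1` on exactly half of the
vectors (`two_mul_card_dotProduct_eq_one`). Both bounds on `μ(n)` follow from this.

Lower bound: if `W` has unit diagonal, each of its rows is nonzero, so the average of `|W x|` over
all `x` is `n / 2`, and the maximum is at least that (`le_two_mul_mu`).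

Upper bound: let `p = 2 ^ k - 1`, let `u_i` run cyclically, with period `p`, through the nonzero
vectors of `𝔽₂ᵏ`, choose `v_j` with `u_j ⬝ v_j = 1`, and put `W i j = u_i ⬝ v_j`. Every `W x` has
the form `(u_i ⬝ y)_i`, a repeated codeword of the simplex code, and each of the at most
`n / p + 1` periods contributes at most `2 ^ (k - 1)` ones. Hence
`2 μ(n) ≤ (n / p + 1) (p + 1)` (`two_mul_mu_le`), and letting first `n` and then `k` tend to
infinity gives the limit `1 / 2`.
-/

open Matrix

/-- A nonzero functional over `𝔽₂` takes the value `1` on exactly half of the vectors. -/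
lemma two_mul_card_dotProduct_eq_one {ι : Type*} [Fintype ι] [DecidableEq ι]
    (r : ι → ZMod 2) (hr : r ≠ 0) :
    2 * (Finset.univ.filter fun x : ι → ZMod 2 => r ⬝ᵥ x = 1).card = 2 ^ Fintype.card ι := by
  obtain ⟨i, hi⟩ := Function.ne_iff.mp hr
  have h01 : ∀ a : ZMod 2, a ≠ 0 ↔ a = 1 := by decide
  have hi1 : r i = 1 := (h01 _).1 hi
  -- Translation by the `i`-th unit vector exchanges the two level sets.
  have hshift : (Finset.univ.filter fun x : ι → ZMod 2 => r ⬝ᵥ x = 1).card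
      = (Finset.univ.filter fun x : ι → ZMod 2 => ¬ r ⬝ᵥ x = 1).card := by
    refine Finset.card_equiv (Equiv.addRight (Pi.single i 1)) fun x => ?_
    have h : ∀ a : ZMod 2, a = 1 ↔ ¬ a + 1 = 1 := by decide
    simpa [dotProduct_add, hi1] using h (r ⬝ᵥ x)
  have hsum := Finset.card_filter_add_card_filter_not (s := (Finset.univ : Finset (ι → ZMod 2)))
    (fun x => r ⬝ᵥ x = 1)
  rw [Finset.card_univ, Fintype.card_fun, ZMod.card] at hsum
  omega

lemma le_two_mul_Mfun {n : ℕ} (W : Matrix (Fin n) (Fin n) (ZMod 2)) (hW : ∀ i, W i i = 1) :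
    n ≤ 2 * Mfun W 0 := by
  have h01 : ∀ a : ZMod 2, a ≠ 0 ↔ a = 1 := by decide
  have hle : ∀ x : Fin n → ZMod 2, hammingNorm (W.mulVec x) ≤ Mfun W 0 := fun x => by
    have := Finset.le_sup (f := fun x : Fin n → ZMod 2 => hammingNorm (W.mulVec x + 0))
      (Finset.mem_univ x)
    simpa [Mfun] using this
  -- Double counting of the pairs `(x, i)` with `(W x) i = 1`.
  have hcount : 2 * ∑ x : Fin n → ZMod 2, hammingNorm (W.mulVec x) = n * 2 ^ n := by
    simp only [hammingNorm, Finset.card_filter]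
    rw [Finset.sum_comm, Finset.mul_sum]
    have : ∀ i : Fin n,
        2 * ∑ x : Fin n → ZMod 2, (if W.mulVec x i ≠ 0 then 1 else 0) = 2 ^ n := fun i => by
      have h := two_mul_card_dotProduct_eq_one (W i)
        (fun h => by simpa [h] using hW i)
      rw [Fintype.card_fin, Finset.card_filter] at h
      simp only [h01]
      exact h
    simp only [this]
    simp
  have hbound : ∑ x : Fin n → ZMod 2, hammingNorm (W.mulVec x) ≤ 2 ^ n * Mfun W 0 := by
    calc _ ≤ ∑ _x : Fin n → ZMod 2, Mfun W 0 := Finset.sum_le_sum fun x _ => hle x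
      _ = _ := by simp
  have hpos : 0 < 2 ^ n := by positivity
  nlinarith

lemma le_two_mul_mu (n : ℕ) : n ≤ 2 * mu n n := by
  have hne : ((fun W => Mfun W 0) '' Aset n n).Nonempty := by
    refine ⟨_, 1, ⟨fun i => by simp, fun j => ?_⟩, rfl⟩
    simpa using hammingNorm_le_card_fintype
      (x := fun i => (1 : Matrix (Fin n) (Fin n) (ZMod 2)) i j)
  obtain ⟨W, hW, h⟩ := Nat.sInf_mem hne
  have := le_two_mul_Mfun W hW.1
  rw [mu, ← h]
  exact this

/-- The upper bound given by the matrix built from the repeated simplex code of length `p = 2 ^ k - 1`. -/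
lemma two_mul_mu_le (n k p : ℕ) (hp : p + 1 = 2 ^ k) (hp0 : 0 < p) :
    2 * mu n n ≤ (n / p + 1) * (p + 1) := by
  have h01 : ∀ a : ZMod 2, a ≠ 0 ↔ a = 1 := by decide
  have hcard : Fintype.card {v : Fin k → ZMod 2 // v ≠ 0} = p := by
    rw [Fintype.card_subtype_compl]
    simp [ZMod.card]
    omega
  let e := (Fintype.equivFinOfCardEq hcard).symm
  let u : Fin n → Fin k → ZMod 2 := fun i => (e ⟨i % p, Nat.mod_lt _ hp0⟩).1
  have hu : ∀ i, u i ≠ 0 := fun i => (e ⟨i % p, Nat.mod_lt _ hp0⟩).2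
  have hv : ∀ j, ∃ v, u j ⬝ᵥ v = 1 := fun j => by
    obtain ⟨l, hl⟩ := Function.ne_iff.mp (hu j)
    exact ⟨Pi.single l 1, by simpa using (h01 _).1 hl⟩
  choose v hv using hv
  let W : Matrix (Fin n) (Fin n) (ZMod 2) := Matrix.of fun i j => u i ⬝ᵥ v j
  have hWA : W ∈ Aset n n :=
    ⟨hv, fun j => by simpa using hammingNorm_le_card_fintype (x := fun i => W i j)⟩
  have hmem : mu n n ≤ Mfun W 0 := Nat.sInf_le ⟨W, hWA, rfl⟩
  have hM : Mfun W 0 ≤ (n / p + 1) * (p + 1) / 2 := by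
    refine Finset.sup_le fun x _ => ?_
    rw [Nat.le_div_iff_mul_le (by norm_num), add_zero, mul_comm]
    -- By linearity `W x` depends on `x` only through the combination `y` of the `v j`.
    set y : Fin k → ZMod 2 := ∑ j, x j • v j
    have hWx : ∀ i, W.mulVec x i = u i ⬝ᵥ y := fun i => by
      simp only [y, dotProduct_sum, dotProduct_smul, smul_eq_mul]
      change ∑ j, (u i ⬝ᵥ v j) * x j = _
      exact Finset.sum_congr rfl fun j _ => mul_comm (u i ⬝ᵥ v j) (x j)
    have hwt : hammingNorm (W.mulVec x)
        ≤ (n / p + 1) * (Finset.univ.filter fun z : Fin k → ZMod 2 => y ⬝ᵥ z = 1).card := by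
      rw [← Finset.card_range (n / p + 1), ← Finset.card_product]
      -- The period containing `i`, together with `u i`, determines `i`.
      refine Finset.card_le_card_of_injOn (fun i => ((i : ℕ) / p, u i)) ?_ ?_
      · intro i hi
        have hi' : u i ⬝ᵥ y = 1 := by
          rw [← hWx, ← h01]
          simpa using hi
        have : (i : ℕ) / p ≤ n / p := Nat.div_le_div_right i.2.le
        simp [dotProduct_comm y, hi', Nat.lt_succ_of_le this]
      · intro i _ j _ hij
        obtain ⟨h1, h2⟩ := Prod.mk.inj hij
        have h3 := congrArg Fin.val (e.injective (Subtype.ext h2))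
        have h4 : (i : ℕ) % p = j % p := h3
        apply Fin.ext
        rw [← Nat.div_add_mod (i : ℕ) p, ← Nat.div_add_mod (j : ℕ) p, h4]
        rw [show (i : ℕ) / p = j / p from h1]
    by_cases hy : y = 0
    · have : hammingNorm (W.mulVec x) = 0 := by
        rw [hammingNorm_eq_zero]
        ext i
        simp [hWx, hy]
      simp [this]
    · have h := two_mul_card_dotProduct_eq_one y hy
      rw [Fintype.card_fin, ← hp] at h
      calc _ ≤ 2 * _ := Nat.mul_le_mul_left 2 hwt
        _ = (n / p + 1) * (p + 1) := by rw [← h]; ring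
  omega

/-- Theorem 1.2: `lim_{n→∞} μ(n)/n = 1/2`, where `μ(n) = μ(n,n)`. -/
theorem mu_div_n_tendsto_half :
    Filter.Tendsto (fun n : ℕ => (mu n n : ℝ) / (n : ℝ)) Filter.atTop (nhds (1 / 2)) := by
  rw [Metric.tendsto_atTop]
  intro ε hε
  obtain ⟨k, hk⟩ := exists_nat_gt (1 / ε)
  -- `p = 2 ^ (k + 1) - 1` satisfies `p ≥ k > 1 / ε`.
  obtain ⟨p, hp⟩ : ∃ p, p + 1 = 2 ^ (k + 1) :=
    ⟨2 ^ (k + 1) - 1, Nat.sub_add_cancel Nat.one_le_two_pow⟩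
  have hkp : k + 1 ≤ p := by
    have := Nat.lt_two_pow_self (n := k + 1)
    omega
  have hpε : 1 / ε < (p : ℝ) := hk.trans_le (by exact_mod_cast (Nat.le_succ k).trans hkp)
  obtain ⟨N, hN⟩ := exists_nat_gt (((p : ℝ) + 1) / ε)
  refine ⟨N + 1, fun n hn => ?_⟩
  have hn0 : (0 : ℝ) < n := by exact_mod_cast (Nat.succ_pos N).trans_le hn
  have hp0 : (0 : ℝ) < p := by exact_mod_cast (Nat.succ_pos k).trans_le hkp
  have hnN : ((p : ℝ) + 1) / ε < n := hN.trans_le (by exact_mod_cast (Nat.le_succ N).trans hn)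
  have hlow : (n : ℝ) ≤ 2 * mu n n := by exact_mod_cast le_two_mul_mu n
  have hup : 2 * (mu n n : ℝ) ≤ ((n : ℝ) / p + 1) * (p + 1) := by
    have h : 2 * (mu n n : ℝ) ≤ ((n / p : ℕ) + 1) * (p + 1) := by
      exact_mod_cast two_mul_mu_le n (k + 1) p hp ((Nat.succ_pos k).trans_le hkp)
    have h' : ((n / p : ℕ) : ℝ) ≤ (n : ℝ) / p := Nat.cast_div_le
    exact h.trans (by gcongr)
  have h1 : (n : ℝ) / p < ε * n := by
    rw [div_lt_iff₀ hε] at hpε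
    rw [div_lt_iff₀ hp0]
    nlinarith
  have h2 : (p : ℝ) + 1 < ε * n := by
    rw [div_lt_iff₀ hε] at hnN
    linarith
  have h3 : ((n : ℝ) / p + 1) * (p + 1) = n + n / p + (p + 1) := by
    field_simp
  rw [Real.dist_eq, abs_of_nonneg]
  · rw [sub_lt_iff_lt_add, div_lt_iff₀ hn0]
    linarith
  · rw [sub_nonneg, le_div_iff₀ hn0]
    linarith
end

section
/- For all positive integers n₁, n₂, m, we have U(n₁ + n₂, m) ≤ U(n₁, m) + U(n₂, m). -/
/-! Let `G k j = 2 j - P k j`, where `P k j` is the least number of powers of two not exceeding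
`2 ^ k` (with repetition) that add up to `j`. Putting two such representations together shows that
`P k` is subadditive, so `G k` is superadditive. On the other hand, for `k = log₂ m` the function
`U(·, m)` is the lower inverse of `G k`:  `U(n, m) ≤ j ↔ n ≤ G k j` (`Ufun_le_iff`); this comes from
the same statement for the sequence `a` on its first `2 ^ (k + 1) - 1` terms (`aseq_le_iff`), proved
by induction on `k`, and the quasi-periodicity `P k (j + q 2 ^ k) = P k j + q`.
The lower inverse of a superadditive function is subadditive. -/

open Matrix

/-- `partCount k j` is the least number of powers of two, each at most `2 ^ k`, with sum `j`,
written `P k j` in the comments. It is given by the greedy choice: use the part `1` exactly `j % 2`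
times and halve the rest. Equivalently, it is `j / 2 ^ k` plus the binary digit sum of
`j % 2 ^ k`. -/
def partCount : ℕ → ℕ → ℕ
  | 0, j => j
  | k + 1, j => partCount k (j / 2) + j % 2

lemma partCount_le (k j : ℕ) : partCount k j ≤ j := by
  induction k generalizing j with
  | zero => exact le_rfl
  | succ k ih =>
    have := ih (j / 2)
    simp only [partCount]
    omega

lemma partCount_add_le (k x y : ℕ) :
    partCount k (x + y) ≤ partCount k x + partCount k y := by
  induction k generalizing x y with
  | zero => exact le_rfl
  | succ k ih =>
    simp only [partCount]
    have h := ih (x / 2) (y / 2)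
    -- A carry out of the lowest bit costs one part but removes two parts equal to `1`.
    rcases (by omega : ((x + y) / 2 = x / 2 + y / 2 ∧ (x + y) % 2 = x % 2 + y % 2) ∨
        ((x + y) / 2 = x / 2 + y / 2 + 1 ∧ (x + y) % 2 + 2 = x % 2 + y % 2)) with
      ⟨h1, h2⟩ | ⟨h1, h2⟩
    · rw [h1]; omega
    · have h3 := ih (x / 2 + y / 2) 1
      have h4 := partCount_le k 1
      rw [h1]; omega

lemma partCount_add_mul (k j q : ℕ) :
    partCount k (j + q * 2 ^ k) = partCount k j + q := by
  induction k generalizing j with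
  | zero => simp [partCount]
  | succ k ih =>
    have h : q * 2 ^ (k + 1) = 2 * (q * 2 ^ k) := by ring
    have h1 : (j + q * 2 ^ (k + 1)) / 2 = j / 2 + q * 2 ^ k := by omega
    have h2 : (j + q * 2 ^ (k + 1)) % 2 = j % 2 := by omega
    simp only [partCount]
    rw [h1, h2, ih]
    omega

lemma partCount_mul (k q : ℕ) : partCount k (q * 2 ^ k) = q := by
  have h := partCount_add_mul k 0 q
  have h0 := partCount_le k 0
  rw [zero_add] at h
  omega

/-- A part `2 ^ (k + 1)` is of no use for representing numbers below `2 ^ (k + 1)`. -/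
lemma partCount_succ_eq (k j : ℕ) (hj : j < 2 ^ (k + 1)) :
    partCount (k + 1) j = partCount k j := by
  induction k generalizing j with
  | zero =>
    simp only [partCount]
    omega
  | succ k ih =>
    have h := ih (j / 2) (by rw [pow_succ] at hj; omega)
    rw [partCount, h, partCount]

/-- The map `j ↦ 2 j - P k j` is monotone. -/
lemma partCount_mono (k : ℕ) {i j : ℕ} (h : i ≤ j) :
    partCount k j + 2 * i ≤ partCount k i + 2 * j := by
  obtain ⟨d, rfl⟩ := Nat.exists_eq_add_of_le h
  have h1 := partCount_add_le k i d
  have h2 := partCount_le k d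
  omega

lemma aseq_one : aseq 1 = 1 := by rw [aseq]

lemma aseq_of_log {r k : ℕ} (h1 : 2 ^ (k + 1) ≤ r) (h2 : r < 2 ^ (k + 2)) :
    aseq r = if r = 2 ^ (k + 2) - 1 then 2 ^ (k + 1)
      else 2 ^ k + aseq (r - (2 ^ (k + 1) - 1)) := by
  have hp : 0 < 2 ^ k := by positivity
  obtain ⟨n, rfl⟩ : ∃ n, r = n + 2 := ⟨r - 2, by rw [pow_succ] at h1; omega⟩
  have hl : Nat.log2 (n + 2) = k + 1 := (Nat.log2_eq_iff (by omega)).2 ⟨h1, h2⟩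
  rw [aseq]
  simp only [hl, Nat.add_sub_cancel]

/-- On `1 ≤ r < 2 ^ (k + 1)`, the sequence `a` is the lower inverse of `j ↦ 2 j - P k j`. -/
lemma aseq_le_iff (k r j : ℕ) (h1 : 1 ≤ r) (h2 : r < 2 ^ (k + 1)) :
    aseq r ≤ j ↔ r + partCount k j ≤ 2 * j := by
  induction k generalizing r j with
  | zero =>
    obtain rfl : r = 1 := by omega
    rw [aseq_one, partCount]
    omega
  | succ k ih =>
    have hp : 0 < 2 ^ k := by positivity
    have e1 : 2 ^ (k + 1) = 2 * 2 ^ k := by ring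
    have e2 : 2 ^ (k + 1 + 1) = 4 * 2 ^ k := by ring
    have hP : partCount (k + 1) (2 ^ (k + 1)) = 1 := by
      simpa using partCount_mul (k + 1) 1
    have hP' : partCount k (2 ^ k) = 1 := by simpa using partCount_mul k 1
    -- From `j = 2 ^ (k + 1)` on, the right-hand side holds for every `r` in the range.
    have hbig (hj : 2 ^ (k + 1) ≤ j) : r + partCount (k + 1) j ≤ 2 * j := by
      have := partCount_mono (k + 1) hj
      omega
    rcases lt_or_ge r (2 ^ (k + 1)) with hr | hr
    · rcases lt_or_ge j (2 ^ (k + 1)) with hj | hj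
      · rw [partCount_succ_eq k j hj]
        exact ih r j h1 hr
      · refine iff_of_true ((ih r j h1 hr).2 ?_) (hbig hj)
        have := partCount_le k j
        omega
    · rw [aseq_of_log hr h2]
      split_ifs with hlast
      · have hr' : r = 2 ^ (k + 1 + 1) - 1 := hlast
        refine ⟨hbig, fun h => ?_⟩
        -- `2 j ≥ 2 ^ (k + 2) - 1` forces `j ≥ 2 ^ (k + 1)` by parity.
        omega
      · have hlast' : r ≠ 2 ^ (k + 1 + 1) - 1 := hlast
        have hi := ih (r - (2 ^ (k + 1) - 1))
        rcases lt_or_ge j (2 ^ (k + 1)) with hj | hj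
        · rw [partCount_succ_eq k j hj]
          rcases lt_or_ge j (2 ^ k) with hj' | hj'
          · exact iff_of_false (by omega) (by omega)
          · obtain ⟨d, rfl⟩ := Nat.exists_eq_add_of_le' hj'
            have hd := hi d (by omega) (by omega)
            have hq : partCount k (d + 2 ^ k) = partCount k d + 1 := by
              simpa using partCount_add_mul k d 1
            rw [hq]
            omega
        · refine iff_of_true ?_ (hbig hj)
          have := (hi (2 ^ k) (by omega) (by omega)).2 (by omega)
          omega

/-- `U(·, m)` is the lower inverse of `j ↦ 2 j - P k j` for `k = log₂ m`. -/
lemma Ufun_le_iff (n m j : ℕ) (hn : 1 ≤ n) :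
    Ufun n m ≤ j ↔ n + partCount (Nat.log2 m) j ≤ 2 * j := by
  unfold Ufun
  generalize Nat.log2 m = k
  have hp : 0 < 2 ^ k := by positivity
  have e1 : 2 ^ (k + 1) = 2 * 2 ^ k := by ring
  have hlt := Nat.mod_lt (n - 1) (by omega : 0 < 2 ^ (k + 1) - 1)
  have hdiv := Nat.div_add_mod (n - 1) (2 ^ (k + 1) - 1)
  dsimp only
  generalize (n - 1) / (2 ^ (k + 1) - 1) = q at *
  generalize (n - 1) % (2 ^ (k + 1) - 1) = s at *
  have hq : (2 ^ (k + 1) - 1) * q + q = 2 * (q * 2 ^ k) := by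
    rw [← Nat.succ_mul, Nat.succ_eq_add_one, Nat.sub_add_cancel (by omega), e1]
    ring
  rcases lt_or_ge j (q * 2 ^ k) with hj | hj
  · have h1 := partCount_mono k hj.le
    have h2 := partCount_mul k q
    exact iff_of_false (by omega) (by omega)
  · obtain ⟨d, rfl⟩ := Nat.exists_eq_add_of_le' hj
    have h := aseq_le_iff k (s + 1) d (by omega) (by omega)
    rw [partCount_add_mul]
    omega

/-- Theorem 4.2: `U(·,m)` is sublinear: `U(n₁+n₂,m) ≤ U(n₁,m) + U(n₂,m)`. -/
theorem U_sublinear (n₁ n₂ m : ℕ) (hn₁ : 1 ≤ n₁) (hn₂ : 1 ≤ n₂) (hm : 1 ≤ m) :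
    Ufun (n₁ + n₂) m ≤ Ufun n₁ m + Ufun n₂ m := by
  rw [Ufun_le_iff _ _ _ (by omega)]
  have h1 := (Ufun_le_iff n₁ m _ hn₁).1 le_rfl
  have h2 := (Ufun_le_iff n₂ m _ hn₂).1 le_rfl
  have h3 := partCount_add_le (Nat.log2 m) (Ufun n₁ m) (Ufun n₂ m)
  omega
end

section
/- For all positive integers n₁ and n₂, we have a(n₁ + n₂) ≤ a(n₁) + a(n₂). -/
/-!
The sequence `a` is the lower adjoint of `f(m) = m + v₂(m!)`, that is,
`a(n) ≤ m ↔ n ≤ f(m)` (`aseq_le_iff`). Since `m₁! m₂!` divides `(m₁ + m₂)!`, the function `f` is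
superadditive, so `n₁ + n₂ ≤ f(a(n₁)) + f(a(n₂)) ≤ f(a(n₁) + a(n₂))`, and the adjunction turns this
into `a(n₁ + n₂) ≤ a(n₁) + a(n₂)`.

The adjunction is proved by strong induction along the recursion of `a`, which mirrors the
self-similarity of `f`: `f(2^j) = 2^(j+1) - 1`, and `f(2^j + m) = f(2^j) + f(m)` for `m < 2^j`
because `v₂(2^j + i) = v₂(i)` for `0 < i < 2^j`.
-/

open Matrix

/-- The function `m ↦ m + v₂(m!)`, the upper adjoint of `aseq`. By Legendre's formula it equals
`2 * m` minus the sum of the binary digits of `m`. -/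
def adjf (m : ℕ) : ℕ := m + padicValNat 2 m.factorial

lemma adjf_zero : adjf 0 = 0 := by simp [adjf]

lemma adjf_succ (m : ℕ) : adjf (m + 1) = adjf m + 1 + padicValNat 2 (m + 1) := by
  unfold adjf
  rw [Nat.factorial_succ, padicValNat.mul (by omega) (Nat.factorial_ne_zero m)]
  omega

lemma adjf_strictMono : StrictMono adjf :=
  strictMono_nat_of_lt_succ fun m => by rw [adjf_succ]; omega

lemma adjf_add_le (m₁ m₂ : ℕ) : adjf m₁ + adjf m₂ ≤ adjf (m₁ + m₂) := by
  unfold adjf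
  have h := (padicValNat_dvd_iff_le (p := 2) (Nat.factorial_ne_zero (m₁ + m₂))).1
    (pow_padicValNat_dvd.trans (Nat.factorial_mul_factorial_dvd_factorial_add m₁ m₂))
  rw [padicValNat.mul (Nat.factorial_ne_zero _) (Nat.factorial_ne_zero _)] at h
  omega

lemma adjf_two_pow (j : ℕ) : adjf (2 ^ j) + 1 = 2 ^ (j + 1) := by
  induction j with
  | zero => simp [adjf]
  | succ j ih =>
    unfold adjf at ih ⊢
    have h := padicValNat_factorial_mul (p := 2) (2 ^ j)
    rw [← pow_succ'] at h
    rw [h]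
    omega

lemma padicValNat_two_pow_add {j i : ℕ} (hi : 0 < i) (hij : i < 2 ^ j) :
    padicValNat 2 (2 ^ j + i) = padicValNat 2 i := by
  have key (t : ℕ) : t ≤ padicValNat 2 (2 ^ j + i) ↔ t ≤ padicValNat 2 i := by
    rw [← padicValNat_dvd_iff_le (by omega), ← padicValNat_dvd_iff_le (by omega)]
    rcases le_total t j with h | h
    · exact (Nat.dvd_add_iff_right (pow_dvd_pow 2 h)).symm
    -- For `t ≥ j` both sides would force `2 ^ j ∣ i`.
    · have hn : ¬ 2 ^ j ∣ i := fun hd => absurd (Nat.le_of_dvd hi hd) (by omega)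
      refine ⟨fun hd => absurd ?_ hn, fun hd => absurd ((pow_dvd_pow 2 h).trans hd) hn⟩
      exact (Nat.dvd_add_iff_right dvd_rfl).2 ((pow_dvd_pow 2 h).trans hd)
  exact le_antisymm ((key _).1 le_rfl) ((key _).2 le_rfl)

lemma adjf_two_pow_add {j m : ℕ} (hm : m < 2 ^ j) :
    adjf (2 ^ j + m) = adjf (2 ^ j) + adjf m := by
  induction m with
  | zero => simp [adjf_zero]
  | succ m ih =>
    have := ih (by omega)
    have h := padicValNat_two_pow_add (j := j) (i := m + 1) (by omega) hm
    rw [← add_assoc, adjf_succ, adjf_succ, this, add_assoc (2 ^ j), h]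
    omega

/-- To pin down `a(n)` against `adjf`, it is enough to bracket `n` between consecutive values. -/
lemma le_iff_of_bracket {n s : ℕ} (h₁ : n ≤ adjf (s + 1)) (h₂ : adjf s < n) (m : ℕ) :
    s + 1 ≤ m ↔ n ≤ adjf m := by
  refine ⟨fun h => h₁.trans (adjf_strictMono.monotone h), fun h => ?_⟩
  exact adjf_strictMono.lt_iff_lt.1 (h₂.trans_le h)

/-- `aseq` is the lower adjoint of `adjf`. -/
lemma aseq_le_iff_s6 (n m : ℕ) : aseq n ≤ m ↔ n ≤ adjf m := by
  induction n using Nat.strong_induction_on generalizing m with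
  | _ n ih =>
  match n, ih with
  | 0, _ => simp [aseq]
  | 1, _ =>
    rw [aseq]
    exact le_iff_of_bracket (s := 0) (by simp [adjf]) (by simp [adjf]) m
  | n + 2, ih =>
    rw [aseq]
    obtain ⟨j, hj⟩ : ∃ j, Nat.log2 (n + 2) = j + 1 :=
      Nat.exists_eq_succ_of_ne_zero
        (by have := (Nat.le_log2 (n := n + 2) (k := 1) (by omega)).2 (by omega); omega)
    have hlo : 2 ^ (j + 1) ≤ n + 2 := (Nat.le_log2 (by omega)).1 hj.ge
    have hhi : n + 2 < 2 ^ (j + 1 + 1) := (Nat.log2_lt (by omega)).1 (by omega)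
    have hf := adjf_two_pow j
    have hp : 0 < 2 ^ j := by positivity
    have e1 : 2 ^ (j + 1) = 2 * 2 ^ j := pow_succ' 2 j
    have e2 : 2 ^ (j + 1 + 1) = 2 * 2 ^ (j + 1) := pow_succ' 2 (j + 1)
    simp only [hj, Nat.add_sub_cancel]
    split_ifs with h
    · have hf' := adjf_two_pow (j + 1)
      obtain ⟨s, hs⟩ : ∃ s, 2 ^ (j + 1) = s + 1 := ⟨2 ^ (j + 1) - 1, by omega⟩
      have hlt : adjf s < adjf (s + 1) := adjf_strictMono (Nat.lt_succ_self s)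
      rw [hs] at hf' ⊢
      exact le_iff_of_bracket (by omega) (by omega) m
    · obtain ⟨i, hi⟩ : ∃ i, n + 2 = (2 ^ (j + 1) - 1) + i := ⟨n + 2 - (2 ^ (j + 1) - 1), by omega⟩
      have hin : n + 2 - (2 ^ (j + 1) - 1) = i := by omega
      rw [hin]
      have IH := ih i (by omega)
      have h₁ : i ≤ adjf (aseq i) := (IH _).1 le_rfl
      have h₂ : aseq i ≤ 2 ^ j := (IH _).2 (by omega)
      have h₃ : aseq i ≠ 0 := fun h0 => by
        have := (IH 0).1 h0.le
        rw [adjf_zero] at this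
        omega
      obtain ⟨s, hs⟩ : ∃ s, aseq i = s + 1 := Nat.exists_eq_succ_of_ne_zero h₃
      have h₄ : adjf s < i := by
        by_contra hc
        have := (IH s).2 (by omega)
        omega
      have h₅ := adjf_add_le (2 ^ j) (s + 1)
      have h₆ := adjf_two_pow_add (j := j) (m := s) (by omega)
      rw [hs] at h₁ ⊢
      exact le_iff_of_bracket (s := 2 ^ j + s) (by rw [add_assoc]; omega) (by omega) m

/-- Corollary 4.3: the sequence `a` is sublinear: `a(n₁+n₂) ≤ a(n₁) + a(n₂)`. -/
theorem aseq_sublinear (n₁ n₂ : ℕ) (hn₁ : 1 ≤ n₁) (hn₂ : 1 ≤ n₂) :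
    aseq (n₁ + n₂) ≤ aseq n₁ + aseq n₂ := by
  rw [aseq_le_iff_s6]
  exact (add_le_add ((aseq_le_iff_s6 n₁ _).1 le_rfl) ((aseq_le_iff_s6 n₂ _).1 le_rfl)).trans
    (adjf_add_le _ _)
end

section
/- For every integer k ≥ 2 and every positive integer n, μ(n, 2^k − 1) = μ(n, 2^k − 2). -/
/-!
Since `Aset n (2^k - 2) ⊆ Aset n (2^k - 1)`, only `mu n (2^k - 2) ≤ mu n (2^k - 1)` needs an
argument: every `W ∈ Aset n (2^k - 1)` is traded for some `W' ∈ Aset n (2^k - 2)` with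
`M(W',0) ≤ M(W,0)`.

Suppose a column `v` of `W` has weight exactly `2^k - 1`, and let `S` be its support. For every `y`
the vectors `W y` and `W y + v` agree off `S` and are complementary on `S`, so one of them has
weight at least `2^(k-1)` on `S`. Hence `M(W,0)` is at least `2^(k-1)` plus the largest weight that
`W y` takes off `S`. Now replace the `S × S` block of `W` by a square matrix whose columns lie in the
simplex code of length `2^k - 1` (index `S` by the nonzero vectors of `𝔽₂ᵏ`; the columns are
coordinate functionals) and put zeros in the two off-diagonal blocks. All nonzero words of the
simplex code have weight `2^(k-1)`, so `M` does not increase (`exists_simplex_replacement`). Because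
`2^(k-1) ≤ 2^k - 2` for `k ≥ 2`, the columns indexed by `S` are no longer of weight `2^k - 1`, while
the others have not gained weight. Induction on the number of columns of weight `2^k - 1` concludes
(`exists_light`).
-/

open Matrix

/-- An additive functional on `𝔽₂ᵏ` takes the value `1` on at most half of the vectors: translation
by one such vector maps the others into the kernel. -/
lemma two_mul_card_functional_le (k : ℕ) (f : (Fin k → ZMod 2) →+ ZMod 2) :
    2 * (Finset.univ.filter fun v => f v ≠ 0).card ≤ 2 ^ k := by
  classical
  have hcard : (Finset.univ.filter fun v => f v ≠ 0).card
      + (Finset.univ.filter fun v => ¬ f v ≠ 0).card = 2 ^ k := by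
    rw [Finset.card_filter_add_card_filter_not]
    simp [ZMod.card]
  by_cases h : ∃ u, f u ≠ 0
  · obtain ⟨u, hu⟩ := h
    have hle : (Finset.univ.filter fun v => f v ≠ 0).card
        ≤ (Finset.univ.filter fun v => ¬ f v ≠ 0).card := by
      apply Finset.card_le_card_of_injOn (fun v => v + u)
      · intro v hv
        simp only [Finset.coe_filter, Finset.mem_univ, true_and, Set.mem_ofPred_eq] at hv ⊢
        rw [map_add]
        revert hv hu
        generalize f v = a
        generalize f u = b
        revert a b
        decide
      · intro a _ b _ hab
        exact add_right_cancel hab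
    omega
  · push Not at h
    simp [h]

lemma hammingNorm_split {n : ℕ} (S : Finset (Fin n)) (z : Fin n → ZMod 2) :
    hammingNorm z = (S.filter fun i => z i ≠ 0).card + (Sᶜ.filter fun i => z i ≠ 0).card := by
  classical
  unfold hammingNorm
  rw [← Finset.card_union_of_disjoint]
  · congr 1
    ext i
    simp only [Finset.mem_filter, Finset.mem_union, Finset.mem_univ, true_and, Finset.mem_compl]
    tauto
  · exact (disjoint_compl_right (a := S)).mono (Finset.filter_subset _ _)
      (Finset.filter_subset _ _)

lemma hammingNorm_mulVec_le_Mfun {n : ℕ} (W : Matrix (Fin n) (Fin n) (ZMod 2))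
    (x : Fin n → ZMod 2) : hammingNorm (W.mulVec x) ≤ Mfun W 0 := by
  have := Finset.le_sup (f := fun x : Fin n → ZMod 2 => hammingNorm (W.mulVec x + 0))
    (Finset.mem_univ x)
  simpa [Mfun] using this

/-- If column `j` of `W` has support `S`, then `M(W,0)` is at least the weight of `W y` off `S` plus
half of `|S|`, since one of `W y`, `W y + W eⱼ` has weight at least `|S| / 2` on `S`. -/
lemma le_two_mul_Mfun_s7 {n : ℕ} (W : Matrix (Fin n) (Fin n) (ZMod 2)) (j : Fin n)
    (S : Finset (Fin n)) (hS : ∀ i, i ∈ S ↔ W i j ≠ 0) (y : Fin n → ZMod 2) :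
    S.card + 2 * (Sᶜ.filter fun i => W.mulVec y i ≠ 0).card ≤ 2 * Mfun W 0 := by
  classical
  have h1 := hammingNorm_mulVec_le_Mfun W y
  have h2 := hammingNorm_mulVec_le_Mfun W (y + Pi.single j 1)
  rw [hammingNorm_split S] at h1 h2
  have hval : ∀ i, W.mulVec (y + Pi.single j 1) i = W.mulVec y i + W i j := by
    intro i
    rw [Matrix.mulVec_add]
    simp
  have hoff : Sᶜ.filter (fun i => W.mulVec (y + Pi.single j 1) i ≠ 0)
      = Sᶜ.filter (fun i => W.mulVec y i ≠ 0) := by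
    apply Finset.filter_congr
    intro i hi
    have : W i j = 0 := by
      by_contra h
      exact (Finset.mem_compl.1 hi) ((hS i).2 h)
    rw [hval, this, add_zero]
  have hon : S.filter (fun i => W.mulVec (y + Pi.single j 1) i ≠ 0)
      = S.filter (fun i => ¬ W.mulVec y i ≠ 0) := by
    apply Finset.filter_congr
    intro i hi
    have := (hS i).1 hi
    rw [hval]
    revert this
    generalize W i j = a
    generalize W.mulVec y i = b
    revert a b
    decide
  have hsum := Finset.card_filter_add_card_filter_not (s := S) (fun i => W.mulVec y i ≠ 0)
  rw [hoff, hon] at h2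
  omega

/-- If column `j` of `W` has weight `2^k - 1` and support `S`, then putting a simplex-code block on
`S × S` and zeros on the two off-diagonal blocks makes all columns indexed by `S` of weight at most
`2^(k-1)`, while the weights of the other columns and `M(W,0)` do not increase. -/
lemma exists_simplex_replacement {n k : ℕ} (hk : 1 ≤ k) (W : Matrix (Fin n) (Fin n) (ZMod 2))
    (hdiag : ∀ i, W i i = 1) (j : Fin n) (S : Finset (Fin n)) (hS : ∀ i, i ∈ S ↔ W i j ≠ 0)
    (hcard : S.card = 2 ^ k - 1) :
    ∃ W' : Matrix (Fin n) (Fin n) (ZMod 2), (∀ i, W' i i = 1) ∧ Mfun W' 0 ≤ Mfun W 0 ∧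
      (∀ l ∈ S, hammingNorm (fun i => W' i l) ≤ 2 ^ (k - 1)) ∧
      (∀ l ∉ S, hammingNorm (fun i => W' i l) ≤ hammingNorm (fun i => W i l)) := by
  classical
  have hpow : 2 ^ k = 2 * 2 ^ (k - 1) := by
    obtain ⟨m, rfl⟩ : ∃ m, k = m + 1 := ⟨k - 1, by omega⟩
    simp [pow_succ, mul_comm]
  have hpos : 0 < 2 ^ (k - 1) := by positivity
  have hN : S.card = ((Finset.univ : Finset (Fin k → ZMod 2)).erase 0).card := by
    rw [hcard, Finset.card_erase_of_mem (Finset.mem_univ _)]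
    simp [ZMod.card]
  -- a labelling of `S` by the nonzero vectors of `𝔽₂ᵏ`, extended by `0` off `S`
  obtain ⟨g, hg0, hgne, hginj⟩ : ∃ g : Fin n → (Fin k → ZMod 2), (∀ i ∉ S, g i = 0) ∧
      (∀ i ∈ S, g i ≠ 0) ∧ Set.InjOn g S := by
    let e := Finset.equivOfCardEq hN
    refine ⟨fun i => if h : i ∈ S then (e ⟨i, h⟩ : Fin k → ZMod 2) else 0, ?_, ?_, ?_⟩
    · intro i hi
      simp [hi]
    · intro i hi
      simp only [hi, dif_pos]
      exact Finset.ne_of_mem_erase (e ⟨i, hi⟩).2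
    · intro a ha b hb hab
      have ha' : a ∈ S := ha
      have hb' : b ∈ S := hb
      simp only [ha', hb', dif_pos] at hab
      simpa using e.injective (Subtype.ext hab)
  have hidx : ∀ i, ∃ t : Fin k, i ∈ S → g i t = 1 := by
    intro i
    by_cases hi : i ∈ S
    · obtain ⟨t, ht⟩ := Function.ne_iff.1 (hgne i hi)
      refine ⟨t, fun _ => ?_⟩
      have ht' : g i t ≠ 0 := ht
      revert ht'
      generalize g i t = a
      revert a
      decide
    · exact ⟨⟨0, hk⟩, fun h => absurd h hi⟩
  choose t ht using hidx
  have key : ∀ f : (Fin k → ZMod 2) →+ ZMod 2,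
      (S.filter fun i => f (g i) ≠ 0).card ≤ 2 ^ (k - 1) := by
    intro f
    have h1 := two_mul_card_functional_le k f
    have h2 : (S.filter fun i => f (g i) ≠ 0).card
        ≤ (Finset.univ.filter fun v => f v ≠ 0).card := by
      apply Finset.card_le_card_of_injOn g
      · intro i hi
        simpa using (Finset.mem_filter.1 hi).2
      · exact hginj.mono (by intro i hi; exact (Finset.mem_filter.1 hi).1)
    omega
  refine ⟨fun i l => if l ∈ S then g i (t l) else if i ∈ S then 0 else W i l, ?_, ?_, ?_, ?_⟩
  · intro i
    by_cases hi : i ∈ S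
    · simp [hi, ht i hi]
    · simp [hi, hdiag i]
  · unfold Mfun
    apply Finset.sup_le
    intro x _
    change _ ≤ Mfun W 0
    rw [add_zero, hammingNorm_split S]
    have hlow := le_two_mul_Mfun_s7 W j S hS (fun l => if l ∈ S then 0 else x l)
    let f : (Fin k → ZMod 2) →+ ZMod 2 :=
      { toFun := fun v => ∑ l, if l ∈ S then v (t l) * x l else 0
        map_zero' := by simp
        map_add' := by
          intro a b
          rw [← Finset.sum_add_distrib]
          apply Finset.sum_congr rfl
          intro l _
          split_ifs
          · simp [add_mul]
          · simp }
    have hf := key f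
    have hon : (S.filter fun i => (Matrix.mulVec (fun i l => if l ∈ S then g i (t l) else
        if i ∈ S then 0 else W i l) x) i ≠ 0) = S.filter fun i => f (g i) ≠ 0 := by
      apply Finset.filter_congr
      intro i hi
      have : (Matrix.mulVec (fun i l => if l ∈ S then g i (t l) else
        if i ∈ S then 0 else W i l) x) i = f (g i) := by
        simp only [Matrix.mulVec, dotProduct, f, AddMonoidHom.coe_mk, ZeroHom.coe_mk]
        apply Finset.sum_congr rfl
        intro l _
        by_cases hl : l ∈ S <;> simp [hl, hi]
      rw [this]
    have hoff : (Sᶜ.filter fun i => (Matrix.mulVec (fun i l => if l ∈ S then g i (t l) else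
        if i ∈ S then 0 else W i l) x) i ≠ 0)
        = Sᶜ.filter fun i => W.mulVec (fun l => if l ∈ S then 0 else x l) i ≠ 0 := by
      apply Finset.filter_congr
      intro i hi
      have hi' := Finset.mem_compl.1 hi
      have : (Matrix.mulVec (fun i l => if l ∈ S then g i (t l) else
        if i ∈ S then 0 else W i l) x) i = W.mulVec (fun l => if l ∈ S then 0 else x l) i := by
        simp only [Matrix.mulVec, dotProduct]
        apply Finset.sum_congr rfl
        intro l _
        by_cases hl : l ∈ S <;> simp [hl, hi', hg0 i hi']
      rw [this]
    rw [hon, hoff]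
    omega
  · intro l hl
    rw [hammingNorm_split S]
    have h1 := key (Pi.evalAddMonoidHom (fun _ : Fin k => ZMod 2) (t l))
    have h2 : (Sᶜ.filter fun i => (if l ∈ S then g i (t l) else
        if i ∈ S then 0 else W i l) ≠ 0) = ∅ := by
      apply Finset.filter_eq_empty_iff.2
      intro i hi
      simp [hl, hg0 i (Finset.mem_compl.1 hi)]
    rw [h2]
    simpa [hl] using h1
  · intro l hl
    unfold hammingNorm
    apply Finset.card_le_card
    intro i hi
    by_cases hiS : i ∈ S <;> simp_all

/-- Replacing a matrix in `A(n, 2^k - 1)` by one in `A(n, 2^k - 2)` without increasing `M`. The bound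
`N` on the number of columns of maximal weight is there for the induction. -/
lemma exists_light {n k : ℕ} (hk : 2 ≤ k) (N : ℕ) :
    ∀ W ∈ Aset n (2 ^ k - 1),
      (Finset.univ.filter fun l => hammingNorm (fun i => W i l) = 2 ^ k - 1).card ≤ N →
      ∃ W' ∈ Aset n (2 ^ k - 2), Mfun W' 0 ≤ Mfun W 0 := by
  classical
  have hpow : 2 ^ k = 2 * 2 ^ (k - 1) := by
    obtain ⟨m, rfl⟩ : ∃ m, k = m + 1 := ⟨k - 1, by omega⟩
    simp [pow_succ, mul_comm]
  have hpos : 2 ≤ 2 ^ (k - 1) := by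
    calc 2 = 2 ^ 1 := rfl
      _ ≤ 2 ^ (k - 1) := Nat.pow_le_pow_right (by norm_num) (by omega)
  induction N with
  | zero =>
    intro W hW hc
    have he := Finset.card_eq_zero.1 (Nat.le_zero.1 hc)
    refine ⟨W, ⟨hW.1, fun l => ?_⟩, le_rfl⟩
    have h1 := hW.2 l
    have h2 := Finset.filter_eq_empty_iff.1 he (Finset.mem_univ l)
    omega
  | succ N ih =>
    intro W hW hc
    by_cases hex : ∃ j, hammingNorm (fun i => W i j) = 2 ^ k - 1
    · obtain ⟨j, hj⟩ := hex
      obtain ⟨W', hd, hM, hin, hout⟩ := exists_simplex_replacement (by omega : 1 ≤ k) W hW.1 j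
        (Finset.univ.filter fun i => W i j ≠ 0) (by simp) hj
      have hjS : j ∈ Finset.univ.filter fun i => W i j ≠ 0 := by simp [hW.1 j]
      have hA : W' ∈ Aset n (2 ^ k - 1) := by
        refine ⟨hd, fun l => ?_⟩
        by_cases hl : l ∈ Finset.univ.filter fun i => W i j ≠ 0
        · have := hin l hl
          omega
        · exact (hout l hl).trans (hW.2 l)
      have hlt : (Finset.univ.filter fun l => hammingNorm (fun i => W' i l) = 2 ^ k - 1).card
          < (Finset.univ.filter fun l => hammingNorm (fun i => W i l) = 2 ^ k - 1).card := by
        apply Finset.card_lt_card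
        refine Finset.ssubset_iff_of_subset ?_ |>.2 ⟨j, by simpa using hj, ?_⟩
        · intro l hl
          have hl' := (Finset.mem_filter.1 hl).2
          refine Finset.mem_filter.2 ⟨Finset.mem_univ _, ?_⟩
          by_cases hlS : l ∈ Finset.univ.filter fun i => W i j ≠ 0
          · have := hin l hlS
            omega
          · have h1 := hout l hlS
            have h2 := hW.2 l
            omega
        · intro h
          have h1 := (Finset.mem_filter.1 h).2
          have h2 := hin j hjS
          omega
      obtain ⟨W'', hW'', hM'⟩ := ih W' hA (by omega)
      exact ⟨W'', hW'', hM'.trans hM⟩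
    · refine ⟨W, ⟨hW.1, fun l => ?_⟩, le_rfl⟩
      have h1 := hW.2 l
      have h2 : hammingNorm (fun i => W i l) ≠ 2 ^ k - 1 := fun h => hex ⟨l, h⟩
      omega

/-- Proposition 5.1: for `k ≥ 2`, `μ(·, 2^k − 1) = μ(·, 2^k − 2)`. -/
theorem mu_pow_sub_one_eq_sub_two (k : ℕ) (hk : 2 ≤ k) (n : ℕ) (hn : 1 ≤ n) :
    mu n (2 ^ k - 1) = mu n (2 ^ k - 2) := by
  have hpos : 4 ≤ 2 ^ k := by
    calc 4 = 2 ^ 2 := rfl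
      _ ≤ 2 ^ k := Nat.pow_le_pow_right (by norm_num) hk
  -- the identity matrix shows that the set of values minimized over is nonempty
  have hne : ∀ m, 1 ≤ m → ((fun W => Mfun W 0) '' Aset n m).Nonempty := by
    intro m hm
    refine Set.Nonempty.image _ ⟨1, fun i => by simp, fun j => le_trans ?_ hm⟩
    unfold hammingNorm
    apply Finset.card_le_one.2
    intro a ha b hb
    simp [Matrix.one_apply] at ha hb
    rw [ha, hb]
  apply le_antisymm
  · obtain ⟨W, hW, hWe⟩ := Nat.sInf_mem (hne (2 ^ k - 2) (by omega))
    refine Nat.sInf_le ⟨W, ⟨hW.1, fun j => (hW.2 j).trans (by omega)⟩, hWe⟩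
  · obtain ⟨W, hW, hWe⟩ := Nat.sInf_mem (hne (2 ^ k - 1) (by omega))
    obtain ⟨W', hW', hM⟩ := exists_light hk _ W hW le_rfl
    calc mu n (2 ^ k - 2) ≤ Mfun W' 0 := Nat.sInf_le ⟨W', hW', rfl⟩
      _ ≤ Mfun W 0 := hM
      _ = mu n (2 ^ k - 1) := hWe
end
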